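/- Let C be a 2-reduced cocommutative dg coalgebra over ℚ. The twisted coextension functor t_* sends quasi-isomorphisms of left dg ΩC-modules to t-equivalences of C-comodules: if f : A → B is a quasi-isomorphism of ΩC-modules then t^!(t_*f) : ΩC ⊗_t (C ⊗^t A) → ΩC ⊗_t (C ⊗^t B) is a quasi-isomorphism. -/

import Mathlib

open scoped TensorProduct

noncomputable section

/-- A homologically graded differential graded `ℚ`-vector space (chain complex of
`ℚ`-vector spaces presented as a graded module with a degree `-1` square-zero differential). -/
structure DGVect : Type 1 where
  carrier : Type
  [isAddCommGroup : AddCommGroup carrier]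
  [isModule : Module ℚ carrier]
  grading : ℤ → Submodule ℚ carrier
  [isDecomp : DirectSum.Decomposition grading]
  d : carrier →ₗ[ℚ] carrier
  d_mem : ∀ (n : ℤ), ∀ x ∈ grading n, d x ∈ grading (n - 1)
  d_sq : d.comp d = 0

attribute [instance] DGVect.isAddCommGroup DGVect.isModule DGVect.isDecomp

/-- The operator acting on the degree `n` graded component by `(-1)^(k*n)`. -/
def signOpOf {V : Type} [AddCommGroup V] [Module ℚ V] (g : ℤ → Submodule ℚ V)
    [DirectSum.Decomposition g] (k : ℤ) : V →ₗ[ℚ] V :=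
  (DirectSum.toModule ℚ ℤ V fun n => ((-1 : ℚ) ^ (k * n)) • (g n).subtype).comp
    (DirectSum.decomposeLinearEquiv g).toLinearMap

/-- The Koszul parity operator, acting by `(-1)^n` in degree `n`. -/
def parityOf {V : Type} [AddCommGroup V] [Module ℚ V] (g : ℤ → Submodule ℚ V)
    [DirectSum.Decomposition g] : V →ₗ[ℚ] V := signOpOf g 1

def DGVect.parity (V : DGVect) : V.carrier →ₗ[ℚ] V.carrier := parityOf V.grading

/-- A graded object is bounded below if it vanishes in all sufficiently negative degrees. -/
def DGVect.BoundedBelow (V : DGVect) : Prop := ∃ b : ℤ, ∀ n : ℤ, n < b → V.grading n = ⊥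

/-- The Koszul signed braiding `v ⊗ w ↦ (-1)^{|v||w|} w ⊗ v` of graded vector spaces. -/
def kSwapOf {V W : Type} [AddCommGroup V] [Module ℚ V] [AddCommGroup W] [Module ℚ W]
    (gV : ℤ → Submodule ℚ V) (gW : ℤ → Submodule ℚ W)
    [DirectSum.Decomposition gV] [DirectSum.Decomposition gW] :
    V ⊗[ℚ] W →ₗ[ℚ] W ⊗[ℚ] V :=
  TensorProduct.lift
    ((DirectSum.toModule ℚ ℤ (W →ₗ[ℚ] W ⊗[ℚ] V) (fun i =>
        (((DirectSum.toModule ℚ ℤ (V →ₗ[ℚ] W ⊗[ℚ] V) (fun j =>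
              ((-1 : ℚ) ^ (i * j)) • ((TensorProduct.mk ℚ W V).comp (gW j).subtype))).comp
            (DirectSum.decomposeLinearEquiv gW).toLinearMap).flip).comp
          (gV i).subtype)).comp
      (DirectSum.decomposeLinearEquiv gV).toLinearMap)

/-- The degree `n` part of the tensor product grading:
the span of the homogeneous tensors of total degree `n`. -/
def tensorGrading {V W : Type} [AddCommGroup V] [Module ℚ V] [AddCommGroup W] [Module ℚ W]
    (gV : ℤ → Submodule ℚ V) (gW : ℤ → Submodule ℚ W) (n : ℤ) : Submodule ℚ (V ⊗[ℚ] W) :=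
  ⨆ p : {p : ℤ × ℤ // p.1 + p.2 = n},
    LinearMap.range (TensorProduct.map (gV p.1.1).subtype (gW p.1.2).subtype)

/-- `f` is a quasi-isomorphism from the complex `(V, dV)` to the complex `(W, dW)`:
it induces a bijection on homology (`ker d / im d`). -/
def IsQuasiIso {V W : Type} [AddCommGroup V] [Module ℚ V] [AddCommGroup W] [Module ℚ W]
    (dV : V →ₗ[ℚ] V) (dW : W →ₗ[ℚ] W) (f : V →ₗ[ℚ] W) : Prop :=
  (∀ x : V, dV x = 0 → (∃ y, f x = dW y) → ∃ z, x = dV z) ∧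
  (∀ w : W, dW w = 0 → ∃ x, dV x = 0 ∧ ∃ y, w - f x = dW y)

/-- A differential graded algebra over `ℚ`. -/
structure DGAlgebra extends DGVect where
  mul : carrier →ₗ[ℚ] carrier →ₗ[ℚ] carrier
  one : carrier
  one_mem : one ∈ grading 0
  mul_mem : ∀ (i j : ℤ) (x y : carrier), x ∈ grading i → y ∈ grading j →
    mul x y ∈ grading (i + j)
  mul_assoc' : ∀ x y z : carrier, mul (mul x y) z = mul x (mul y z)
  one_mul' : ∀ x : carrier, mul one x = x
  mul_one' : ∀ x : carrier, mul x one = x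
  leibniz : ∀ (i : ℤ) (x y : carrier), x ∈ grading i →
    d (mul x y) = mul (d x) y + ((-1 : ℚ) ^ i) • mul x (d y)

/-- The multiplication of a dg algebra as a map out of the tensor product. -/
def DGAlgebra.mulMap (A : DGAlgebra) : A.carrier ⊗[ℚ] A.carrier →ₗ[ℚ] A.carrier :=
  TensorProduct.lift A.mul

/-- A dg algebra is connective if it is concentrated in non-negative degrees. -/
def DGAlgebra.Connective (A : DGAlgebra) : Prop := ∀ n : ℤ, n < 0 → A.grading n = ⊥

/-- A (coassociative counital) differential graded coalgebra over `ℚ`,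
non-negatively graded. -/
structure DGCoalgebra extends DGVect where
  comul : carrier →ₗ[ℚ] carrier ⊗[ℚ] carrier
  counit : carrier →ₗ[ℚ] ℚ
  nonneg : ∀ n : ℤ, n < 0 → grading n = ⊥
  comul_mem : ∀ (n : ℤ), ∀ x ∈ grading n, comul x ∈ tensorGrading grading grading n
  counit_zero : ∀ (n : ℤ), n ≠ 0 → ∀ x ∈ grading n, counit x = 0
  coassoc : (TensorProduct.assoc ℚ carrier carrier carrier).toLinearMap.comp
      ((TensorProduct.map comul LinearMap.id).comp comul)
      = (TensorProduct.map LinearMap.id comul).comp comul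
  counit_comul_left : (TensorProduct.lid ℚ carrier).toLinearMap.comp
      ((TensorProduct.map counit LinearMap.id).comp comul) = LinearMap.id
  counit_comul_right : (TensorProduct.rid ℚ carrier).toLinearMap.comp
      ((TensorProduct.map LinearMap.id counit).comp comul) = LinearMap.id
  comul_chain : comul.comp d
      = (TensorProduct.map d LinearMap.id + TensorProduct.map (parityOf grading) d).comp comul
  counit_chain : counit.comp d = 0

/-- Cocommutativity: the comultiplication is invariant under the Koszul signed twist. -/
def DGCoalgebra.Cocomm (C : DGCoalgebra) : Prop :=
  (kSwapOf C.grading C.grading).comp C.comul = C.comul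

/-- A coaugmented dg coalgebra: a dg coalgebra with a coaugmentation `η : ℚ → C`,
recorded by the grouplike element `one = η 1` in degree `0`. -/
structure CoaugDGCoalgebra extends DGCoalgebra where
  one : carrier
  one_mem : one ∈ grading 0
  counit_one : counit one = 1
  comul_one : comul one = one ⊗ₜ[ℚ] one

/-- A coaugmented dg coalgebra is 2-reduced if `C₀ = ℚ` (spanned by the coaugmentation)
and `C₁ = 0`. -/
def CoaugDGCoalgebra.TwoReduced (C : CoaugDGCoalgebra) : Prop :=
  C.grading 0 = Submodule.span ℚ {C.one} ∧ C.grading 1 = ⊥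

/-- A twisting chain `τ : C ⇝ A`: a degree `-1` linear map satisfying
`d(τc) = -τ(dc) - (-1)^{|c₍₀₎|} τ(c₍₀₎)·τ(c₍₁₎)`. -/
structure TwistingChain (C : DGCoalgebra) (A : DGAlgebra) where
  toFun : C.carrier →ₗ[ℚ] A.carrier
  mem : ∀ (n : ℤ), ∀ x ∈ C.grading n, toFun x ∈ A.grading (n - 1)
  twist : A.d.comp toFun + toFun.comp C.d
      + A.mulMap.comp ((TensorProduct.map (toFun.comp (parityOf C.grading)) toFun).comp C.comul)
      = 0

/-- A left dg module over a dg algebra. -/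
structure DGModule (A : DGAlgebra) extends DGVect where
  smul : A.carrier →ₗ[ℚ] carrier →ₗ[ℚ] carrier
  smul_mem : ∀ (i j : ℤ) (a : A.carrier) (x : carrier), a ∈ A.grading i → x ∈ grading j →
    smul a x ∈ grading (i + j)
  one_smul' : ∀ x : carrier, smul A.one x = x
  mul_smul' : ∀ (a b : A.carrier) (x : carrier), smul (A.mul a b) x = smul a (smul b x)
  leibniz : ∀ (i : ℤ) (a : A.carrier) (x : carrier), a ∈ A.grading i →
    d (smul a x) = smul (A.d a) x + ((-1 : ℚ) ^ i) • smul a (d x)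

/-- The action of a dg module as a map out of the tensor product. -/
def DGModule.actionMap {A : DGAlgebra} (M : DGModule A) :
    A.carrier ⊗[ℚ] M.carrier →ₗ[ℚ] M.carrier := TensorProduct.lift M.smul

/-- A left dg comodule over a dg coalgebra. -/
structure DGComodule (C : DGCoalgebra) extends DGVect where
  coact : carrier →ₗ[ℚ] C.carrier ⊗[ℚ] carrier
  coact_mem : ∀ (n : ℤ), ∀ x ∈ grading n, coact x ∈ tensorGrading C.grading grading n
  coassoc : (TensorProduct.assoc ℚ C.carrier C.carrier carrier).toLinearMap.comp
      ((TensorProduct.map C.comul LinearMap.id).comp coact)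
      = (TensorProduct.map LinearMap.id coact).comp coact
  counit_coact : (TensorProduct.lid ℚ carrier).toLinearMap.comp
      ((TensorProduct.map C.counit LinearMap.id).comp coact) = LinearMap.id
  coact_chain : coact.comp d
      = (TensorProduct.map C.d LinearMap.id + TensorProduct.map (parityOf C.grading) d).comp coact

/-- Morphisms of dg modules: degree `0` graded chain maps commuting with the action. -/
def IsModuleHom (A : DGAlgebra) (M M' : DGModule A)
    (g : M.carrier →ₗ[ℚ] M'.carrier) : Prop :=
  (∀ (n : ℤ), ∀ x ∈ M.grading n, g x ∈ M'.grading n) ∧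
  g.comp M.d = M'.d.comp g ∧
  g.comp M.actionMap = M'.actionMap.comp (TensorProduct.map LinearMap.id g)

/-- Morphisms of dg comodules: degree `0` graded chain maps commuting with the coaction. -/
def IsComoduleHom (C : DGCoalgebra) (N N' : DGComodule C)
    (f : N.carrier →ₗ[ℚ] N'.carrier) : Prop :=
  (∀ (n : ℤ), ∀ x ∈ N.grading n, f x ∈ N'.grading n) ∧
  f.comp N.d = N'.d.comp f ∧
  (TensorProduct.map LinearMap.id f).comp N.coact = N'.coact.comp f

/-- The `A`-action on a twisted extension `A ⊗_τ N`: multiplication on the first factor. -/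
def extAction (A : DGAlgebra) (N : Type) [AddCommGroup N] [Module ℚ N] :
    A.carrier ⊗[ℚ] (A.carrier ⊗[ℚ] N) →ₗ[ℚ] A.carrier ⊗[ℚ] N :=
  (TensorProduct.map A.mulMap LinearMap.id).comp
    (TensorProduct.assoc ℚ A.carrier A.carrier N).symm.toLinearMap

/-- The differential of the twisted extension `A ⊗_τ N`:
`d(a ⊗ n) = da ⊗ n + (-1)^{|a|} a ⊗ dn - (-1)^{|a|} a·τ(n₍₀₎) ⊗ n₍₁₎`
for a `C`-comodule `(N, dN, ρ)`. -/
def extDiff (C : DGCoalgebra) (A : DGAlgebra) (τ : TwistingChain C A)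
    (N : Type) [AddCommGroup N] [Module ℚ N]
    (dN : N →ₗ[ℚ] N) (ρ : N →ₗ[ℚ] C.carrier ⊗[ℚ] N) :
    A.carrier ⊗[ℚ] N →ₗ[ℚ] A.carrier ⊗[ℚ] N :=
  TensorProduct.map A.d LinearMap.id + TensorProduct.map (parityOf A.grading) dN
    - (TensorProduct.map
        (A.mulMap.comp (TensorProduct.map (parityOf A.grading) τ.toFun)) LinearMap.id).comp
        ((TensorProduct.assoc ℚ A.carrier C.carrier N).symm.toLinearMap.comp
          (TensorProduct.map LinearMap.id ρ))

/-- The `C`-coaction on a twisted coextension `C ⊗^τ M`, namely `Δ ⊗ id`. -/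
def coextCoact (C : DGCoalgebra) (M : Type) [AddCommGroup M] [Module ℚ M] :
    C.carrier ⊗[ℚ] M →ₗ[ℚ] C.carrier ⊗[ℚ] (C.carrier ⊗[ℚ] M) :=
  (TensorProduct.assoc ℚ C.carrier C.carrier M).toLinearMap.comp
    (TensorProduct.map C.comul LinearMap.id)

/-- The differential of the twisted coextension `C ⊗^τ M`, expressed in terms of the map
`tact : C ⊗ M → M`, `c ⊗ m ↦ τ(c)·m`:
`d(c ⊗ m) = dc ⊗ m + (-1)^{|c|} c ⊗ dm + (-1)^{|c₍₀₎|} c₍₀₎ ⊗ τ(c₍₁₎)·m`. -/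
def coextDiffFrom (C : DGCoalgebra) (M : Type) [AddCommGroup M] [Module ℚ M]
    (dM : M →ₗ[ℚ] M) (tact : C.carrier ⊗[ℚ] M →ₗ[ℚ] M) :
    C.carrier ⊗[ℚ] M →ₗ[ℚ] C.carrier ⊗[ℚ] M :=
  TensorProduct.map C.d LinearMap.id + TensorProduct.map (parityOf C.grading) dM
    + (TensorProduct.map (parityOf C.grading) tact).comp (coextCoact C M)

/-- The differential of the twisted coextension `C ⊗^τ M` of an `A`-module `(M, dM, act)`. -/
def coextDiff (C : DGCoalgebra) (A : DGAlgebra) (τ : TwistingChain C A)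
    (M : Type) [AddCommGroup M] [Module ℚ M]
    (dM : M →ₗ[ℚ] M) (act : A.carrier ⊗[ℚ] M →ₗ[ℚ] M) :
    C.carrier ⊗[ℚ] M →ₗ[ℚ] C.carrier ⊗[ℚ] M :=
  coextDiffFrom C M dM (act.comp (TensorProduct.map τ.toFun LinearMap.id))

/-- Morphisms of dg algebras. -/
structure DGAlgebraHom (A B : DGAlgebra) where
  toLinearMap : A.carrier →ₗ[ℚ] B.carrier
  mem : ∀ (n : ℤ), ∀ x ∈ A.grading n, toLinearMap x ∈ B.grading n
  chain : toLinearMap.comp A.d = B.d.comp toLinearMap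
  map_one : toLinearMap A.one = B.one
  map_mul : ∀ x y : A.carrier, toLinearMap (A.mul x y) = B.mul (toLinearMap x) (toLinearMap y)

/-- Data exhibiting a dg algebra as the cobar construction `ΩC` of a coaugmented
dg coalgebra `C`, via the universal twisting chain `t : C ⇝ ΩC`:
dg algebra maps `ΩC → A` correspond bijectively to twisting chains `C ⇝ A`
vanishing on the coaugmentation. -/
structure CobarData (C : CoaugDGCoalgebra) where
  alg : DGAlgebra
  t : TwistingChain C.toDGCoalgebra alg
  t_one : t.toFun C.one = 0
  univ : ∀ (A : DGAlgebra) (τ : TwistingChain C.toDGCoalgebra A), τ.toFun C.one = 0 →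
    ∃! F : DGAlgebraHom alg A, F.toLinearMap.comp t.toFun = τ.toFun

/-- A morphism of `C`-comodules is a `t`-equivalence if the induced morphism of twisted
extensions `ΩC ⊗_t N → ΩC ⊗_t M` is a quasi-isomorphism. -/
def IsTEquiv (C : CoaugDGCoalgebra) (Ω : CobarData C) (N M : DGComodule C.toDGCoalgebra)
    (f : N.carrier →ₗ[ℚ] M.carrier) : Prop :=
  IsQuasiIso (extDiff C.toDGCoalgebra Ω.alg Ω.t N.carrier N.d N.coact)
    (extDiff C.toDGCoalgebra Ω.alg Ω.t M.carrier M.d M.coact)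
    (TensorProduct.map LinearMap.id f)

/-! ## Statement 7: `t_*` sends quasi-isomorphisms to `t`-equivalences -/

/-!
Filter `ΩC ⊗_t (C ⊗^t A)` by the degree in `C`. Since `C₀ = ℚ`, the twisting chain `t` vanishes on
`C₀`, so both twisting terms, as well as the internal differential of `C`, strictly lower this
filtration; what remains of the differential involves only the differentials of `ΩC` and `A`.
Over a field the mapping cone of the quasi-isomorphism `f` is contractible, and tensoring a
contraction with `ΩC ⊗ C` contracts the cone of `t^!(t_* f)` for these remaining differentials. For
the full differentials it is a contraction up to an error that lowers the filtration, and hence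
every cycle of the cone is a boundary, by induction on the filtration.
-/

section Cone

variable {R V W : Type*} [Ring R] [AddCommGroup V] [Module R V] [AddCommGroup W] [Module R W]

/-- The differential `(x, y) ↦ (-dx, f x + dy)` of the mapping cone of `f`. -/
def coneDiff (dV : V →ₗ[R] V) (dW : W →ₗ[R] W) (f : V →ₗ[R] W) : V × W →ₗ[R] V × W :=
  (-dV ∘ₗ LinearMap.fst R V W).prod (f.coprod dW)

variable {dV : V →ₗ[R] V} {dW : W →ₗ[R] W} {f : V →ₗ[R] W}

@[simp]
theorem coneDiff_apply (p : V × W) : coneDiff dV dW f p = (-dV p.1, f p.1 + dW p.2) :=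
  rfl

theorem coneDiff_comp_self (hV : dV ∘ₗ dV = 0) (hW : dW ∘ₗ dW = 0) (hf : f ∘ₗ dV = dW ∘ₗ f) :
    coneDiff dV dW f ∘ₗ coneDiff dV dW f = 0 := by
  refine LinearMap.ext fun p => Prod.ext ?_ ?_
  · simpa using LinearMap.congr_fun hV p.1
  · have hfp : f (dV p.1) = dW (f p.1) := LinearMap.congr_fun hf p.1
    have hWp : dW (dW p.2) = 0 := LinearMap.congr_fun hW p.2
    simp [hfp, hWp]

/-- A contraction of the mapping cone of `f`, in components: `inv` is a homotopy inverse of `f`,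
`homSource` and `homTarget` witness `inv ∘ f ≃ 1` and `f ∘ inv ≃ 1`, and `homCoh` compares the two
resulting homotopies from `f ∘ inv ∘ f` to `f`. -/
structure ConeContraction (dV : V →ₗ[R] V) (dW : W →ₗ[R] W) (f : V →ₗ[R] W) where
  inv : W →ₗ[R] V
  homSource : V →ₗ[R] V
  homTarget : W →ₗ[R] W
  homCoh : V →ₗ[R] W
  inv_chain : inv ∘ₗ dW = dV ∘ₗ inv
  homSource_eq : dV ∘ₗ homSource + homSource ∘ₗ dV = LinearMap.id - inv ∘ₗ f
  homTarget_eq : dW ∘ₗ homTarget + homTarget ∘ₗ dW = LinearMap.id - f ∘ₗ inv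
  homCoh_eq : dW ∘ₗ homCoh - homCoh ∘ₗ dV = f ∘ₗ homSource - homTarget ∘ₗ f

/-- The contraction as an endomorphism of the underlying space of the cone. -/
def ConeContraction.toMap (s : ConeContraction dV dW f) : V × W →ₗ[R] V × W :=
  (LinearMap.coprod (-s.homSource) s.inv).prod (LinearMap.coprod s.homCoh s.homTarget)

theorem ConeContraction.coneDiff_toMap (s : ConeContraction dV dW f) (p : V × W) :
    coneDiff dV dW f (s.toMap p) + s.toMap (coneDiff dV dW f p) = p := by
  have inv_chain := LinearMap.congr_fun s.inv_chain p.2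
  have source := LinearMap.congr_fun s.homSource_eq p.1
  have target := LinearMap.congr_fun s.homTarget_eq p.2
  have coh := LinearMap.congr_fun s.homCoh_eq p.1
  simp only [LinearMap.sub_apply, LinearMap.add_apply, LinearMap.comp_apply, LinearMap.id_apply]
    at inv_chain source target coh
  refine Prod.ext ?_ ?_
  · simp only [toMap, LinearMap.prod_apply, Function.prod_apply, LinearMap.coprod_apply,
      LinearMap.neg_apply, coneDiff_apply, map_add, map_neg, neg_add_rev, neg_neg,
      Prod.mk_add_mk]
    grind
  · simp only [toMap, LinearMap.prod_apply, Function.prod_apply, LinearMap.coprod_apply,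
      LinearMap.neg_apply, coneDiff_apply, map_add, map_neg, neg_add_rev, neg_neg,
      Prod.mk_add_mk]
    grind

end Cone

theorem exists_contraction_of_exact {K V : Type*} [Field K] [AddCommGroup V] [Module K V]
    {d : V →ₗ[K] V} (hd : Function.Exact d d) :
    ∃ s : V →ₗ[K] V, d ∘ₗ s + s ∘ₗ d = LinearMap.id := by
  obtain ⟨σ, hσ⟩ := d.rangeRestrict.exists_rightInverse_of_surjective d.range_rangeRestrict
  obtain ⟨g, hg⟩ := LinearMap.exists_extend σ
  have d_g_d (x : V) : d (g (d x)) = d x := by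
    have hgx : g (d x) = σ (d.rangeRestrict x) := LinearMap.congr_fun hg (d.rangeRestrict x)
    rw [hgx]
    exact congrArg Subtype.val (LinearMap.congr_fun hσ (d.rangeRestrict x))
  refine ⟨g ∘ₗ (LinearMap.id - g ∘ₗ d), LinearMap.ext fun x => ?_⟩
  obtain ⟨y, hy⟩ := (hd (x - g (d x))).1 (by simp [d_g_d])
  have d_g : d (g (x - g (d x))) = x - g (d x) := by rw [← hy, d_g_d]
  have d_d : d (d x) = 0 := hd.apply_apply_eq_zero x
  simp only [LinearMap.add_apply, LinearMap.comp_apply, LinearMap.sub_apply, LinearMap.id_apply,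
    d_g, d_d, map_zero, sub_zero, sub_add_cancel]

section QuasiIso

variable {V W : Type} [AddCommGroup V] [Module ℚ V] [AddCommGroup W] [Module ℚ W]
  {dV : V →ₗ[ℚ] V} {dW : W →ₗ[ℚ] W} {f : V →ₗ[ℚ] W}

theorem IsQuasiIso.exact_coneDiff (hf : IsQuasiIso dV dW f) (hV : dV ∘ₗ dV = 0)
    (hW : dW ∘ₗ dW = 0) (hchain : f ∘ₗ dV = dW ∘ₗ f) :
    Function.Exact (coneDiff dV dW f) (coneDiff dV dW f) := by
  rintro ⟨x, y⟩
  constructor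
  · intro hxy
    obtain ⟨hx, hy⟩ : dV x = 0 ∧ f x + dW y = 0 := by simpa using hxy
    obtain ⟨z, rfl⟩ := hf.1 x hx ⟨-y, by simpa using eq_neg_of_add_eq_zero_left hy⟩
    have hfz : f (dV z) = dW (f z) := LinearMap.congr_fun hchain z
    obtain ⟨u, hu, v, huv⟩ := hf.2 (f z + y) (by rw [map_add, ← hfz, hy])
    exact ⟨(u - z, v), by simp [hu, ← huv]⟩
  · rintro ⟨p, hp⟩
    rw [← hp]
    exact LinearMap.congr_fun (coneDiff_comp_self hV hW hchain) p

theorem isQuasiIso_of_exact_coneDiff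
    (h : Function.Exact (coneDiff dV dW f) (coneDiff dV dW f)) : IsQuasiIso dV dW f := by
  constructor
  · rintro x hx ⟨y, hy⟩
    obtain ⟨⟨z, w⟩, hzw⟩ := (h (x, -y)).1 (by simp [hx, hy])
    exact ⟨-z, by simpa using (congrArg Prod.fst hzw).symm⟩
  · intro w hw
    obtain ⟨⟨x, y⟩, hxy⟩ := (h (0, w)).1 (by simp [hw])
    obtain ⟨hx, hy⟩ := Prod.ext_iff.1 hxy
    exact ⟨x, by simpa using hx, y, sub_eq_of_eq_add' hy.symm⟩

theorem IsQuasiIso.nonempty_coneContraction (hV : dV ∘ₗ dV = 0) (hW : dW ∘ₗ dW = 0)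
    (hf : f ∘ₗ dV = dW ∘ₗ f) (hq : IsQuasiIso dV dW f) : Nonempty (ConeContraction dV dW f) := by
  obtain ⟨s, hs⟩ := exists_contraction_of_exact (hq.exact_coneDiff hV hW hf)
  let a := s ∘ₗ LinearMap.inl ℚ V W
  let b := s ∘ₗ LinearMap.inr ℚ V W
  have s_mk (x : V) (y : W) : s (x, y) = a x + b y := by simp [a, b, ← map_add]
  have at_inl (x : V) : coneDiff dV dW f (a x) + (-a (dV x) + b (f x)) = (x, 0) := by
    have hx : coneDiff dV dW f (s (x, 0)) + s (coneDiff dV dW f (x, 0)) = (x, 0) :=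
      LinearMap.congr_fun hs (x, 0)
    have d_inl : coneDiff dV dW f (x, 0) = (-dV x, f x) := by simp
    simpa only [d_inl, s_mk, map_zero, add_zero, map_neg] using hx
  have at_inr (y : W) : coneDiff dV dW f (b y) + b (dW y) = (0, y) := by
    have hy : coneDiff dV dW f (s (0, y)) + s (coneDiff dV dW f (0, y)) = (0, y) :=
      LinearMap.congr_fun hs (0, y)
    have d_inr : coneDiff dV dW f (0, y) = (0, dW y) := by simp
    simpa only [d_inr, s_mk, map_zero, zero_add] using hy
  simp only [coneDiff_apply, Prod.ext_iff, Prod.fst_add, Prod.snd_add, Prod.fst_neg,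
    Prod.snd_neg] at at_inl at_inr
  exact ⟨{
    inv := LinearMap.fst ℚ V W ∘ₗ b
    homSource := -(LinearMap.fst ℚ V W ∘ₗ a)
    homTarget := LinearMap.snd ℚ V W ∘ₗ b
    homCoh := LinearMap.snd ℚ V W ∘ₗ a
    inv_chain := LinearMap.ext fun y => by
      simp only [LinearMap.coe_comp, LinearMap.coe_fst, Function.comp_apply]
      grind
    homSource_eq := LinearMap.ext fun x => by
      simp only [LinearMap.comp_neg, LinearMap.neg_comp, LinearMap.add_apply, LinearMap.neg_apply,
        LinearMap.coe_comp, LinearMap.coe_fst, Function.comp_apply, LinearMap.sub_apply,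
        LinearMap.id_coe, id_eq]
      grind
    homTarget_eq := LinearMap.ext fun y => by
      simp only [LinearMap.add_apply, LinearMap.coe_comp, LinearMap.coe_snd, Function.comp_apply,
        LinearMap.sub_apply, LinearMap.id_coe, id_eq, LinearMap.coe_fst]
      grind
    homCoh_eq := LinearMap.ext fun x => by
      simp only [LinearMap.sub_apply, LinearMap.coe_comp, LinearMap.coe_snd, Function.comp_apply,
        LinearMap.comp_neg, LinearMap.neg_apply, LinearMap.coe_fst]
      grind }⟩

end QuasiIso

section Filtration

variable {R V W : Type*} [Ring R] [AddCommGroup V] [Module R V] [AddCommGroup W] [Module R W]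

/-- An increasing exhaustive filtration, indexed so that it starts from zero. -/
structure IsExhaustiveFiltration (F : ℕ → Submodule R V) : Prop where
  mono : Monotone F
  zero_eq_bot : F 0 = ⊥
  iSup_eq_top : ⨆ p, F p = ⊤

theorem IsExhaustiveFiltration.exists_mem {F : ℕ → Submodule R V} (hF : IsExhaustiveFiltration F)
    (x : V) : ∃ p, x ∈ F p :=
  (Submodule.mem_iSup_of_directed F hF.mono.directed_le).1 (hF.iSup_eq_top ▸ Submodule.mem_top)

theorem IsExhaustiveFiltration.prod {F : ℕ → Submodule R V} {G : ℕ → Submodule R W}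
    (hF : IsExhaustiveFiltration F) (hG : IsExhaustiveFiltration G) :
    IsExhaustiveFiltration fun p => (F p).prod (G p) where
  mono _ _ hpq := Submodule.prod_mono (hF.mono hpq) (hG.mono hpq)
  zero_eq_bot := by rw [hF.zero_eq_bot, hG.zero_eq_bot, Submodule.prod_bot]
  iSup_eq_top := Submodule.eq_top_iff'.2 fun ⟨x, y⟩ => by
    obtain ⟨p, hx⟩ := hF.exists_mem x
    obtain ⟨q, hy⟩ := hG.exists_mem y
    exact Submodule.mem_iSup_of_mem (max p q)
      ⟨hF.mono (le_max_left p q) hx, hG.mono (le_max_right p q) hy⟩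

theorem exact_of_contraction_mod_filtration {D S : V →ₗ[R] V} (hD : D ∘ₗ D = 0)
    {F : ℕ → Submodule R V} (hF : IsExhaustiveFiltration F)
    (hS : ∀ p, ∀ x ∈ F (p + 1), D (S x) + S (D x) - x ∈ F p) : Function.Exact D D := by
  have D_D (x : V) : D (D x) = 0 := LinearMap.congr_fun hD x
  have cycle_mem_range (p : ℕ) : ∀ x ∈ F p, D x = 0 → x ∈ LinearMap.range D := by
    induction p with
    | zero =>
      intro x hx _
      rw [hF.zero_eq_bot, Submodule.mem_bot] at hx
      exact hx ▸ zero_mem _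
    | succ p ih =>
      intro x hx hDx
      have remainder : D (S x) - x ∈ F p := by simpa [hDx] using hS p x hx
      have remainder_mem := ih _ remainder (by simp [hDx, D_D])
      simpa using sub_mem (LinearMap.mem_range_self D (S x)) remainder_mem
  intro x
  constructor
  · intro hDx
    obtain ⟨p, hp⟩ := hF.exists_mem x
    exact cycle_mem_range p x hp hDx
  · rintro ⟨y, rfl⟩
    exact D_D y

end Filtration

theorem isQuasiIso_of_coneContraction_mod_filtration {V W : Type} [AddCommGroup V] [Module ℚ V]
    [AddCommGroup W] [Module ℚ W] {dV dV₀ : V →ₗ[ℚ] V} {dW dW₀ : W →ₗ[ℚ] W}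
    {f : V →ₗ[ℚ] W} (hV : dV ∘ₗ dV = 0) (hW : dW ∘ₗ dW = 0) (hf : f ∘ₗ dV = dW ∘ₗ f)
    (s : ConeContraction dV₀ dW₀ f) {F : ℕ → Submodule ℚ V} {G : ℕ → Submodule ℚ W}
    (hF : IsExhaustiveFiltration F) (hG : IsExhaustiveFiltration G)
    (hdV : ∀ p, ∀ x ∈ F (p + 1), dV x - dV₀ x ∈ F p)
    (hdW : ∀ p, ∀ y ∈ G (p + 1), dW y - dW₀ y ∈ G p)
    (hs : ∀ p, ∀ z ∈ (F p).prod (G p), s.toMap z ∈ (F p).prod (G p)) :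
    IsQuasiIso dV dW f := by
  let N := coneDiff dV dW f - coneDiff dV₀ dW₀ f
  have N_mem (p : ℕ) (z : V × W) (hz : z ∈ (F (p + 1)).prod (G (p + 1))) :
      N z ∈ (F p).prod (G p) := by
    have hN : N z = (-(dV z.1 - dV₀ z.1), dW z.2 - dW₀ z.2) :=
      Prod.ext
        (by
          simp only [LinearMap.sub_apply, coneDiff_apply, Prod.mk_sub_mk, sub_neg_eq_add,
            neg_sub, N]
          abel)
        (by simp [N])
    rw [hN]
    exact ⟨neg_mem (hdV p z.1 hz.1), hdW p z.2 hz.2⟩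
  refine isQuasiIso_of_exact_coneDiff (exact_of_contraction_mod_filtration (S := s.toMap)
    (coneDiff_comp_self hV hW hf) (hF.prod hG) fun p z hz => ?_)
  have defect : coneDiff dV dW f (s.toMap z) + s.toMap (coneDiff dV dW f z) - z
      = N (s.toMap z) + s.toMap (N z) := by
    nth_rw 3 [← s.coneDiff_toMap z]
    simp only [N, LinearMap.sub_apply, map_sub]
    abel
  rw [defect]
  exact add_mem (N_mem p _ (hs _ z hz)) (hs p _ (N_mem p z hz))

theorem tensorGrading_le {V W : Type} [AddCommGroup V] [Module ℚ V] [AddCommGroup W] [Module ℚ W]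
    {g : ℤ → Submodule ℚ V} {h : ℤ → Submodule ℚ W} {n : ℤ} {P : Submodule ℚ (V ⊗[ℚ] W)}
    (H : ∀ i j, i + j = n → ∀ x ∈ g i, ∀ y ∈ h j, x ⊗ₜ y ∈ P) : tensorGrading g h n ≤ P := by
  refine iSup_le fun ⟨⟨i, j⟩, hij⟩ => ?_
  rintro _ ⟨z, rfl⟩
  induction z with
  | zero => simp
  | tmul x y => exact H i j hij x x.2 y y.2
  | add z w hz hw => simpa using P.add_mem hz hw

section Parity

variable {V W : Type} [AddCommGroup V] [Module ℚ V] [AddCommGroup W] [Module ℚ W]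
  (g : ℤ → Submodule ℚ V) [DirectSum.Decomposition g]
  (h : ℤ → Submodule ℚ W) [DirectSum.Decomposition h]

theorem parityOf_of_mem {n : ℤ} {x : V} (hx : x ∈ g n) : parityOf g x = (-1 : ℚ) ^ n • x := by
  lift x to g n using hx
  rw [parityOf, signOpOf, LinearMap.comp_apply, LinearEquiv.coe_coe,
    DirectSum.decomposeLinearEquiv_apply, DirectSum.decompose_coe, ← DirectSum.lof_eq_of ℚ,
    DirectSum.toModule_lof]
  simp

theorem parityOf_mem {n : ℤ} {x : V} (hx : x ∈ g n) : parityOf g x ∈ g n :=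
  parityOf_of_mem g hx ▸ (g n).smul_mem _ hx

variable {g} in
theorem linearMap_ext_of_homogeneous {φ ψ : V →ₗ[ℚ] W} (H : ∀ n, ∀ x ∈ g n, φ x = ψ x) : φ = ψ :=
  DirectSum.decompose_lhom_ext g fun n => LinearMap.ext fun x => H n x x.2

theorem parityOf_comp_parityOf : parityOf g ∘ₗ parityOf g = LinearMap.id :=
  linearMap_ext_of_homogeneous (g := g) fun n x hx => by
    simp [parityOf_of_mem g hx, smul_smul, ← mul_zpow]

@[simp]
theorem parityOf_parityOf (x : V) : parityOf g (parityOf g x) = x :=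
  LinearMap.congr_fun (parityOf_comp_parityOf g) x

variable {g h} in
theorem parityOf_apply_of_lowers {φ : V →ₗ[ℚ] W} (hφ : ∀ n, ∀ x ∈ g n, φ x ∈ h (n - 1)) (x : V) :
    parityOf h (φ x) = -φ (parityOf g x) := by
  refine LinearMap.congr_fun (f := parityOf h ∘ₗ φ) (g := -(φ ∘ₗ parityOf g))
    (linearMap_ext_of_homogeneous (g := g) fun n y hy => ?_) x
  simp [parityOf_of_mem g hy, parityOf_of_mem h (hφ n y hy), zpow_sub_one₀]

theorem map_parityOf_of_mem_tensorGrading {n : ℤ} {z : V ⊗[ℚ] W} (hz : z ∈ tensorGrading g h n) :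
    TensorProduct.map (parityOf g) (parityOf h) z = (-1 : ℚ) ^ n • z := by
  suffices tensorGrading g h n ≤ LinearMap.eqLocus
      (TensorProduct.map (parityOf g) (parityOf h)) ((-1 : ℚ) ^ n • LinearMap.id) from this hz
  refine tensorGrading_le fun i j hij x hx y hy => ?_
  simp [parityOf_of_mem g hx, parityOf_of_mem h hy, ← TensorProduct.smul_tmul', smul_smul, ← hij,
    zpow_add₀, mul_comm]

end Parity

theorem DGVect.d_d (V : DGVect) (x : V.carrier) : V.d (V.d x) = 0 :=
  LinearMap.congr_fun V.d_sq x

theorem DGVect.parityOf_d (V : DGVect) (x : V.carrier) :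
    parityOf V.grading (V.d x) = -V.d (parityOf V.grading x) :=
  parityOf_apply_of_lowers V.d_mem x

theorem DGAlgebra.parityOf_mul (A : DGAlgebra) (x y : A.carrier) :
    parityOf A.grading (A.mul x y) = A.mul (parityOf A.grading x) (parityOf A.grading y) := by
  have : A.mul.compr₂ (parityOf A.grading)
      = A.mul.compl₁₂ (parityOf A.grading) (parityOf A.grading) :=
    linearMap_ext_of_homogeneous (g := A.grading) fun i a ha =>
      linearMap_ext_of_homogeneous (g := A.grading) fun j b hb => by
        simp [parityOf_of_mem _ ha, parityOf_of_mem _ hb,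
          parityOf_of_mem _ (A.mul_mem i j a b ha hb), zpow_add₀, smul_smul, mul_comm]
  exact LinearMap.congr_fun₂ this x y

theorem DGAlgebra.d_mul (A : DGAlgebra) (x y : A.carrier) :
    A.d (A.mul x y) = A.mul (A.d x) y + A.mul (parityOf A.grading x) (A.d y) := by
  have : A.mul.compr₂ A.d
      = A.mul ∘ₗ A.d + A.mul.compl₁₂ (parityOf A.grading) A.d :=
    linearMap_ext_of_homogeneous (g := A.grading) fun i a ha => LinearMap.ext fun b => by
      simp [A.leibniz i a b ha, parityOf_of_mem _ ha]
  exact LinearMap.congr_fun₂ this x y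

theorem DGModule.d_smul {A : DGAlgebra} (M : DGModule A) (a : A.carrier) (x : M.carrier) :
    M.d (M.smul a x) = M.smul (A.d a) x + M.smul (parityOf A.grading a) (M.d x) := by
  have : M.smul.compr₂ M.d
      = M.smul ∘ₗ A.d + M.smul.compl₁₂ (parityOf A.grading) M.d :=
    linearMap_ext_of_homogeneous (g := A.grading) fun i b hb => LinearMap.ext fun y => by
      simp [M.leibniz i b y hb, parityOf_of_mem _ hb]
  exact LinearMap.congr_fun₂ this a x

theorem DGCoalgebra.comul_comp_parityOf (C : DGCoalgebra) :
    C.comul ∘ₗ parityOf C.grading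
      = TensorProduct.map (parityOf C.grading) (parityOf C.grading) ∘ₗ C.comul :=
  linearMap_ext_of_homogeneous (g := C.grading) fun n c hc => by
    simp [parityOf_of_mem _ hc, map_parityOf_of_mem_tensorGrading _ _ (C.comul_mem n c hc)]

theorem DGCoalgebra.counit_comp_parityOf (C : DGCoalgebra) :
    C.counit ∘ₗ parityOf C.grading = C.counit :=
  linearMap_ext_of_homogeneous (g := C.grading) fun n c hc => by
    obtain rfl | hn := eq_or_ne n 0
    · simp [parityOf_of_mem _ hc]
    · simp [parityOf_of_mem _ hc, C.counit_zero n hn c hc]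

theorem TwistingChain.parityOf_toFun {C : DGCoalgebra} {A : DGAlgebra} (τ : TwistingChain C A)
    (c : C.carrier) : parityOf A.grading (τ.toFun c) = -τ.toFun (parityOf C.grading c) :=
  parityOf_apply_of_lowers τ.mem c

theorem TwistingChain.mulMap_map_comul {C : DGCoalgebra} {A : DGAlgebra} (τ : TwistingChain C A)
    (c : C.carrier) :
    A.mulMap (TensorProduct.map (τ.toFun ∘ₗ parityOf C.grading) τ.toFun (C.comul c))
      = -(A.d (τ.toFun c) + τ.toFun (C.d c)) :=
  eq_neg_of_add_eq_zero_right (LinearMap.congr_fun τ.twist c)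

/-- A dg comodule `(N, dN, ρ)` over `C`, forgetting the grading and the counit axiom. This is the
structure that makes the twisted extension `A ⊗_τ N` a complex. -/
structure IsDGCoaction (C : DGCoalgebra) {N : Type} [AddCommGroup N] [Module ℚ N]
    (dN : N →ₗ[ℚ] N) (ρ : N →ₗ[ℚ] C.carrier ⊗[ℚ] N) : Prop where
  d_sq : dN ∘ₗ dN = 0
  coassoc : coextCoact C N ∘ₗ ρ = TensorProduct.map LinearMap.id ρ ∘ₗ ρ
  chain : ρ ∘ₗ dN
    = (TensorProduct.map C.d LinearMap.id + TensorProduct.map (parityOf C.grading) dN) ∘ₗ ρ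

section Extension

variable {C : DGCoalgebra} {A : DGAlgebra} {N N' : Type} [AddCommGroup N] [Module ℚ N]
  [AddCommGroup N'] [Module ℚ N']

@[simp]
theorem extAction_tmul (a b : A.carrier) (n : N) :
    extAction A N (a ⊗ₜ (b ⊗ₜ n)) = A.mul a b ⊗ₜ n :=
  rfl

theorem extAction_mul (a b : A.carrier) (x : A.carrier ⊗[ℚ] N) :
    extAction A N (A.mul a b ⊗ₜ x) = extAction A N (a ⊗ₜ extAction A N (b ⊗ₜ x)) := by
  induction x with
  | zero => simp
  | tmul c n => simp [A.mul_assoc']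
  | add x y hx hy => simp only [TensorProduct.tmul_add, map_add, hx, hy]

theorem map_id_extAction (v : N →ₗ[ℚ] N') (a : A.carrier) (x : A.carrier ⊗[ℚ] N) :
    TensorProduct.map LinearMap.id v (extAction A N (a ⊗ₜ x))
      = extAction A N' (a ⊗ₜ TensorProduct.map LinearMap.id v x) := by
  induction x with
  | zero => simp
  | tmul b n => simp
  | add x y hx hy => simp only [TensorProduct.tmul_add, map_add, hx, hy]

theorem extDiff_tmul (τ : TwistingChain C A) (dN : N →ₗ[ℚ] N) (ρ : N →ₗ[ℚ] C.carrier ⊗[ℚ] N)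
    (a : A.carrier) (n : N) :
    extDiff C A τ N dN ρ (a ⊗ₜ n) = A.d a ⊗ₜ n + parityOf A.grading a ⊗ₜ dN n
      - extAction A N (parityOf A.grading a ⊗ₜ TensorProduct.map τ.toFun LinearMap.id (ρ n)) := by
  have twist (z : C.carrier ⊗[ℚ] N) :
      TensorProduct.map (A.mulMap ∘ₗ TensorProduct.map (parityOf A.grading) τ.toFun) LinearMap.id
          ((TensorProduct.assoc ℚ A.carrier C.carrier N).symm (a ⊗ₜ z))
        = extAction A N (parityOf A.grading a ⊗ₜ TensorProduct.map τ.toFun LinearMap.id z) := by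
    induction z with
    | zero => simp
    | tmul c n => rfl
    | add z w hz hw => simp only [TensorProduct.tmul_add, map_add, hz, hw]
  simp [extDiff, twist]

theorem extDiff_extAction (τ : TwistingChain C A) (dN : N →ₗ[ℚ] N)
    (ρ : N →ₗ[ℚ] C.carrier ⊗[ℚ] N) (a : A.carrier) (x : A.carrier ⊗[ℚ] N) :
    extDiff C A τ N dN ρ (extAction A N (a ⊗ₜ x)) = extAction A N (A.d a ⊗ₜ x)
      + extAction A N (parityOf A.grading a ⊗ₜ extDiff C A τ N dN ρ x) := by
  induction x with
  | zero => simp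
  | tmul b n =>
    simp only [extAction_tmul, extDiff_tmul, A.d_mul, A.parityOf_mul, extAction_mul,
      TensorProduct.add_tmul, TensorProduct.tmul_add, TensorProduct.tmul_sub, map_add, map_sub]
    abel
  | add x y hx hy =>
    simp only [TensorProduct.tmul_add, map_add, hx, hy]
    abel

theorem extDiff_comp_map_toFun_coact (τ : TwistingChain C A) {dN : N →ₗ[ℚ] N}
    {ρ : N →ₗ[ℚ] C.carrier ⊗[ℚ] N} (hρ : IsDGCoaction C dN ρ) :
    extDiff C A τ N dN ρ ∘ₗ TensorProduct.map τ.toFun LinearMap.id ∘ₗ ρ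
      = -(TensorProduct.map τ.toFun LinearMap.id ∘ₗ ρ ∘ₗ dN) := by
  let τπ := τ.toFun ∘ₗ parityOf C.grading
  let E : C.carrier ⊗[ℚ] (C.carrier ⊗[ℚ] N) →ₗ[ℚ] A.carrier ⊗[ℚ] N :=
    extAction A N ∘ₗ TensorProduct.map τπ (TensorProduct.map τ.toFun LinearMap.id)
  have expand : extDiff C A τ N dN ρ ∘ₗ TensorProduct.map τ.toFun LinearMap.id
      = TensorProduct.map (A.d ∘ₗ τ.toFun) LinearMap.id - TensorProduct.map τπ dN
        + E ∘ₗ TensorProduct.map LinearMap.id ρ :=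
    TensorProduct.ext' fun c n => by
      simp [E, τπ, extDiff_tmul, τ.parityOf_toFun, TensorProduct.neg_tmul, ← sub_eq_add_neg]
  have quadratic : E ∘ₗ coextCoact C N
      = -TensorProduct.map (A.d ∘ₗ τ.toFun + τ.toFun ∘ₗ C.d) LinearMap.id := by
    have assoc (z : C.carrier ⊗[ℚ] C.carrier) (n : N) :
        E (TensorProduct.assoc ℚ _ _ _ (z ⊗ₜ n))
          = A.mulMap (TensorProduct.map τπ τ.toFun z) ⊗ₜ n := by
      induction z with
      | zero => simp
      | tmul c c' => rfl
      | add z w hz hw => simp only [TensorProduct.add_tmul, map_add, hz, hw]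
    refine TensorProduct.ext' fun c n => (assoc (C.comul c) n).trans ?_
    rw [τ.mulMap_map_comul, TensorProduct.neg_tmul]
    rfl
  rw [← LinearMap.comp_assoc, expand, LinearMap.add_comp, LinearMap.comp_assoc, ← hρ.coassoc,
    ← LinearMap.comp_assoc, quadratic, hρ.chain, ← LinearMap.comp_assoc, ← LinearMap.add_comp,
    ← LinearMap.neg_comp]
  congr 1
  refine TensorProduct.ext' fun c n => ?_
  simp only [LinearMap.add_apply, LinearMap.sub_apply, TensorProduct.map_tmul, LinearMap.coe_comp,
    Function.comp_apply, LinearMap.id_coe, id_eq, LinearMap.neg_apply, TensorProduct.add_tmul,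
    neg_add_rev, map_add, τπ]
  abel

theorem extDiff_comp_self (τ : TwistingChain C A) {dN : N →ₗ[ℚ] N}
    {ρ : N →ₗ[ℚ] C.carrier ⊗[ℚ] N} (hρ : IsDGCoaction C dN ρ) :
    extDiff C A τ N dN ρ ∘ₗ extDiff C A τ N dN ρ = 0 := by
  refine TensorProduct.ext' fun a n => ?_
  have coact_term : extDiff C A τ N dN ρ (TensorProduct.map τ.toFun LinearMap.id (ρ n))
      = -TensorProduct.map τ.toFun LinearMap.id (ρ (dN n)) :=
    LinearMap.congr_fun (extDiff_comp_map_toFun_coact τ hρ) n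
  have dN_dN : dN (dN n) = 0 := LinearMap.congr_fun hρ.d_sq n
  rw [LinearMap.comp_apply, extDiff_tmul, map_sub, map_add, extDiff_tmul, extDiff_tmul,
    extDiff_extAction, coact_term, dN_dN, A.d_d, A.parityOf_d, parityOf_parityOf]
  simp only [TensorProduct.zero_tmul, TensorProduct.tmul_zero, TensorProduct.neg_tmul,
    TensorProduct.tmul_neg, map_neg, LinearMap.zero_apply]
  abel

theorem extDiff_comp_map_id (τ : TwistingChain C A) {dN : N →ₗ[ℚ] N}
    {ρ : N →ₗ[ℚ] C.carrier ⊗[ℚ] N} {dN' : N' →ₗ[ℚ] N'} {ρ' : N' →ₗ[ℚ] C.carrier ⊗[ℚ] N'}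
    {v : N →ₗ[ℚ] N'} (hd : v ∘ₗ dN = dN' ∘ₗ v)
    (hρ : TensorProduct.map LinearMap.id v ∘ₗ ρ = ρ' ∘ₗ v) :
    TensorProduct.map LinearMap.id v ∘ₗ extDiff C A τ N dN ρ
      = extDiff C A τ N' dN' ρ' ∘ₗ TensorProduct.map LinearMap.id v := by
  refine TensorProduct.ext' fun a n => ?_
  have hdn : v (dN n) = dN' (v n) := LinearMap.congr_fun hd n
  have hρn : ρ' (v n) = TensorProduct.map LinearMap.id v (ρ n) := (LinearMap.congr_fun hρ n).symm
  simp [extDiff_tmul, map_id_extAction, hdn, hρn, TensorProduct.map_map]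

end Extension

section Coextension

variable {C : DGCoalgebra} {M M' : Type} [AddCommGroup M] [Module ℚ M]
  [AddCommGroup M'] [Module ℚ M']

theorem coextCoact_comp_flip_mk (m : M) :
    coextCoact C M ∘ₗ (TensorProduct.mk ℚ C.carrier M).flip m
      = TensorProduct.map LinearMap.id ((TensorProduct.mk ℚ C.carrier M).flip m) ∘ₗ C.comul := by
  have assoc (z : C.carrier ⊗[ℚ] C.carrier) : TensorProduct.assoc ℚ _ _ _ (z ⊗ₜ m)
      = TensorProduct.map LinearMap.id ((TensorProduct.mk ℚ C.carrier M).flip m) z := by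
    induction z with
    | zero => simp
    | tmul c c' => rfl
    | add z w hz hw => rw [TensorProduct.add_tmul, map_add, map_add, hz, hw]
  exact LinearMap.ext fun c => assoc (C.comul c)

theorem coextCoact_tmul (c : C.carrier) (m : M) :
    coextCoact C M (c ⊗ₜ m)
      = TensorProduct.map LinearMap.id ((TensorProduct.mk ℚ C.carrier M).flip m) (C.comul c) :=
  LinearMap.congr_fun (coextCoact_comp_flip_mk m) c

theorem map_flip_mk (φ : C.carrier →ₗ[ℚ] C.carrier) (u : M →ₗ[ℚ] M') (m : M) :
    TensorProduct.map φ u ∘ₗ (TensorProduct.mk ℚ C.carrier M).flip m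
      = (TensorProduct.mk ℚ C.carrier M').flip (u m) ∘ₗ φ :=
  rfl

theorem coextCoact_comp_map {φ : C.carrier →ₗ[ℚ] C.carrier}
    (hφ : C.comul ∘ₗ φ = TensorProduct.map φ φ ∘ₗ C.comul) (u : M →ₗ[ℚ] M') :
    coextCoact C M' ∘ₗ TensorProduct.map φ u
      = TensorProduct.map φ (TensorProduct.map φ u) ∘ₗ coextCoact C M := by
  refine TensorProduct.ext' fun c m => ?_
  have hφc : C.comul (φ c) = TensorProduct.map φ φ (C.comul c) := LinearMap.congr_fun hφ c
  simp [coextCoact_tmul, hφc, TensorProduct.map_map, map_flip_mk]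

theorem coextCoact_comp_map_d :
    coextCoact C M ∘ₗ TensorProduct.map C.d LinearMap.id
      = (TensorProduct.map C.d LinearMap.id
          + TensorProduct.map (parityOf C.grading) (TensorProduct.map C.d LinearMap.id))
        ∘ₗ coextCoact C M := by
  refine TensorProduct.ext' fun c m => ?_
  have chain : C.comul (C.d c) = TensorProduct.map C.d LinearMap.id (C.comul c)
      + TensorProduct.map (parityOf C.grading) C.d (C.comul c) :=
    LinearMap.congr_fun C.comul_chain c
  simp [coextCoact_tmul, chain, TensorProduct.map_map, map_flip_mk]

theorem coextCoact_coassoc :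
    coextCoact C (C.carrier ⊗[ℚ] M) ∘ₗ coextCoact C M
      = TensorProduct.map LinearMap.id (coextCoact C M) ∘ₗ coextCoact C M := by
  refine TensorProduct.ext' fun c m => ?_
  have coassoc : TensorProduct.assoc ℚ _ _ _ (TensorProduct.map C.comul LinearMap.id (C.comul c))
      = TensorProduct.map LinearMap.id C.comul (C.comul c) :=
    LinearMap.congr_fun C.coassoc c
  let i := (TensorProduct.mk ℚ C.carrier M).flip m
  calc coextCoact C (C.carrier ⊗[ℚ] M) (coextCoact C M (c ⊗ₜ m))
      = TensorProduct.assoc ℚ _ _ _ (TensorProduct.map C.comul i (C.comul c)) := by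
        rw [coextCoact_tmul, coextCoact, LinearMap.comp_apply, TensorProduct.map_map]
        rfl
    _ = TensorProduct.map LinearMap.id (TensorProduct.map LinearMap.id i)
          (TensorProduct.assoc ℚ _ _ _
            (TensorProduct.map C.comul LinearMap.id (C.comul c))) := by
        rw [TensorProduct.map_map_assoc, TensorProduct.map_map]
        simp
    _ = TensorProduct.map LinearMap.id (coextCoact C M) (coextCoact C M (c ⊗ₜ m)) := by
        rw [coassoc, coextCoact_tmul, TensorProduct.map_map, TensorProduct.map_map,
          coextCoact_comp_flip_mk]

/-- The projection `ε ⊗ 1 : C ⊗ M → M` onto the cogenerators of the cofree comodule. -/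
def cofreeProj (C : DGCoalgebra) (M : Type) [AddCommGroup M] [Module ℚ M] :
    C.carrier ⊗[ℚ] M →ₗ[ℚ] M :=
  TensorProduct.lid ℚ M ∘ₗ TensorProduct.map C.counit LinearMap.id

theorem cofreeProj_tmul (c : C.carrier) (m : M) : cofreeProj C M (c ⊗ₜ m) = C.counit c • m :=
  rfl

theorem cofreeProj_comp_map {φ : C.carrier →ₗ[ℚ] C.carrier} (hφ : C.counit ∘ₗ φ = C.counit)
    (u : M →ₗ[ℚ] M') : cofreeProj C M' ∘ₗ TensorProduct.map φ u = u ∘ₗ cofreeProj C M :=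
  TensorProduct.ext' fun c m => by
    have hφc : C.counit (φ c) = C.counit c := LinearMap.congr_fun hφ c
    simp [cofreeProj_tmul, hφc]

theorem cofreeProj_comp_coextCoact :
    cofreeProj C (C.carrier ⊗[ℚ] M) ∘ₗ coextCoact C M = LinearMap.id := by
  refine TensorProduct.ext' fun c m => ?_
  have counit : TensorProduct.lid ℚ _ (TensorProduct.map C.counit LinearMap.id (C.comul c)) = c :=
    LinearMap.congr_fun C.counit_comul_left c
  have lid (z : C.carrier ⊗[ℚ] C.carrier) :
      cofreeProj C _ (TensorProduct.map LinearMap.id ((TensorProduct.mk ℚ C.carrier M).flip m) z)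
        = TensorProduct.lid ℚ _ (TensorProduct.map C.counit LinearMap.id z) ⊗ₜ m := by
    induction z with
    | zero => simp
    | tmul a b => simp [cofreeProj_tmul, TensorProduct.smul_tmul']
    | add z w hz hw => simp only [map_add, TensorProduct.add_tmul, hz, hw]
  rw [LinearMap.comp_apply, coextCoact_tmul, lid, counit, LinearMap.id_apply]

theorem map_cofreeProj_comp_coextCoact :
    TensorProduct.map LinearMap.id (cofreeProj C M) ∘ₗ coextCoact C M = LinearMap.id := by
  refine TensorProduct.ext' fun c m => ?_
  have counit : TensorProduct.rid ℚ _ (TensorProduct.map LinearMap.id C.counit (C.comul c)) = c :=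
    LinearMap.congr_fun C.counit_comul_right c
  have rid (z : C.carrier ⊗[ℚ] C.carrier) :
      TensorProduct.map LinearMap.id (cofreeProj C M)
          (TensorProduct.map LinearMap.id ((TensorProduct.mk ℚ C.carrier M).flip m) z)
        = TensorProduct.rid ℚ _ (TensorProduct.map LinearMap.id C.counit z) ⊗ₜ m := by
    induction z with
    | zero => simp
    | tmul a b => simp [cofreeProj_tmul, TensorProduct.smul_tmul']
    | add z w hz hw => simp only [map_add, TensorProduct.add_tmul, hz, hw]
  rw [LinearMap.comp_apply, coextCoact_tmul, rid, counit, LinearMap.id_apply]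

theorem coextCoact_comp_coextDiffFrom (dM : M →ₗ[ℚ] M) (tact : C.carrier ⊗[ℚ] M →ₗ[ℚ] M) :
    coextCoact C M ∘ₗ coextDiffFrom C M dM tact
      = (TensorProduct.map C.d LinearMap.id
          + TensorProduct.map (parityOf C.grading) (coextDiffFrom C M dM tact))
        ∘ₗ coextCoact C M := by
  have twist : coextCoact C M ∘ₗ TensorProduct.map (parityOf C.grading) tact ∘ₗ coextCoact C M
      = TensorProduct.map (parityOf C.grading)
          (TensorProduct.map (parityOf C.grading) tact ∘ₗ coextCoact C M) ∘ₗ coextCoact C M := by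
    rw [← LinearMap.comp_assoc, coextCoact_comp_map C.comul_comp_parityOf, LinearMap.comp_assoc,
      coextCoact_coassoc, ← LinearMap.comp_assoc, ← TensorProduct.map_comp, LinearMap.comp_id]
  rw [coextDiffFrom, LinearMap.comp_add, LinearMap.comp_add, coextCoact_comp_map_d,
    coextCoact_comp_map C.comul_comp_parityOf, twist]
  simp only [TensorProduct.map_add_right, LinearMap.add_comp]
  abel

theorem cofreeProj_comp_coextDiffFrom (dM : M →ₗ[ℚ] M) (tact : C.carrier ⊗[ℚ] M →ₗ[ℚ] M) :
    cofreeProj C M ∘ₗ coextDiffFrom C M dM tact = dM ∘ₗ cofreeProj C M + tact := by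
  have counit_d : cofreeProj C M ∘ₗ TensorProduct.map C.d LinearMap.id = 0 :=
    TensorProduct.ext' fun c m => by
      have : C.counit (C.d c) = 0 := LinearMap.congr_fun C.counit_chain c
      simp [cofreeProj_tmul, this]
  rw [coextDiffFrom, LinearMap.comp_add, LinearMap.comp_add, counit_d,
    cofreeProj_comp_map C.counit_comp_parityOf, ← LinearMap.comp_assoc,
    cofreeProj_comp_map C.counit_comp_parityOf, LinearMap.comp_assoc, cofreeProj_comp_coextCoact,
    zero_add, LinearMap.comp_id]

/-- The square of a coderivation of odd degree is a coderivation, so it is determined by its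
projection to `M`. -/
theorem coextDiffFrom_comp_self {dM : M →ₗ[ℚ] M} {tact : C.carrier ⊗[ℚ] M →ₗ[ℚ] M}
    (hdM : dM ∘ₗ dM = 0) (htact : dM ∘ₗ tact + tact ∘ₗ coextDiffFrom C M dM tact = 0) :
    coextDiffFrom C M dM tact ∘ₗ coextDiffFrom C M dM tact = 0 := by
  set D := coextDiffFrom C M dM tact
  have coact_D : coextCoact C M ∘ₗ D = (TensorProduct.map C.d LinearMap.id
      + TensorProduct.map (parityOf C.grading) D) ∘ₗ coextCoact C M :=
    coextCoact_comp_coextDiffFrom dM tact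
  have proj_D : cofreeProj C M ∘ₗ D = dM ∘ₗ cofreeProj C M + tact :=
    cofreeProj_comp_coextDiffFrom dM tact
  have coact_D_D : coextCoact C M ∘ₗ D ∘ₗ D
      = TensorProduct.map LinearMap.id (D ∘ₗ D) ∘ₗ coextCoact C M := by
    rw [← LinearMap.comp_assoc, coact_D, LinearMap.comp_assoc, coact_D, ← LinearMap.comp_assoc]
    congr 1
    refine TensorProduct.ext' fun c x => ?_
    simp [C.d_d, C.parityOf_d, TensorProduct.neg_tmul]
  have proj_D_D : cofreeProj C M ∘ₗ D ∘ₗ D = 0 := by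
    rw [← LinearMap.comp_assoc, proj_D, LinearMap.add_comp, LinearMap.comp_assoc, proj_D,
      LinearMap.comp_add, ← LinearMap.comp_assoc, hdM, LinearMap.zero_comp, zero_add, htact]
  calc D ∘ₗ D = TensorProduct.map LinearMap.id (cofreeProj C M) ∘ₗ coextCoact C M ∘ₗ D ∘ₗ D := by
        rw [← LinearMap.comp_assoc, map_cofreeProj_comp_coextCoact, LinearMap.id_comp]
    _ = TensorProduct.map LinearMap.id (cofreeProj C M ∘ₗ D ∘ₗ D) ∘ₗ coextCoact C M := by
        rw [coact_D_D, ← LinearMap.comp_assoc, ← TensorProduct.map_comp, LinearMap.id_comp]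
    _ = 0 := by rw [proj_D_D, TensorProduct.map_zero_right, LinearMap.zero_comp]

/-- The map `c ⊗ m ↦ τ(c) · m`, which is the argument `tact` of `coextDiffFrom` in the twisted
coextension of `M`. -/
def twistedAction {A : DGAlgebra} (τ : TwistingChain C A) (M : DGModule A) :
    C.carrier ⊗[ℚ] M.carrier →ₗ[ℚ] M.carrier :=
  M.actionMap ∘ₗ TensorProduct.map τ.toFun LinearMap.id

theorem twistedAction_tmul {A : DGAlgebra} (τ : TwistingChain C A) (M : DGModule A)
    (c : C.carrier) (m : M.carrier) : twistedAction τ M (c ⊗ₜ m) = M.smul (τ.toFun c) m :=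
  rfl

theorem twistedAction_maurerCartan {A : DGAlgebra} (τ : TwistingChain C A) (M : DGModule A) :
    M.d ∘ₗ twistedAction τ M
      + twistedAction τ M ∘ₗ coextDiffFrom C M.carrier M.d (twistedAction τ M) = 0 := by
  refine TensorProduct.ext' fun c m => ?_
  have quadratic (z : C.carrier ⊗[ℚ] C.carrier) :
      twistedAction τ M (TensorProduct.map (parityOf C.grading) (twistedAction τ M)
          (TensorProduct.map LinearMap.id ((TensorProduct.mk ℚ C.carrier M.carrier).flip m) z))
        = M.smul (A.mulMap (TensorProduct.map (τ.toFun ∘ₗ parityOf C.grading) τ.toFun z)) m := by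
    induction z with
    | zero => simp
    | tmul a b => exact (M.mul_smul' _ _ _).symm
    | add z w hz hw => simp only [map_add, LinearMap.add_apply, hz, hw]
  simp only [coextDiffFrom, LinearMap.add_apply, LinearMap.comp_apply, TensorProduct.map_tmul,
    LinearMap.id_apply, twistedAction_tmul, M.d_smul, τ.parityOf_toFun, coextCoact_tmul, quadratic,
    τ.mulMap_map_comul, map_add, map_neg, LinearMap.neg_apply, neg_add_rev, LinearMap.zero_apply]
  abel

theorem isDGCoaction_coextDiff {A : DGAlgebra} (τ : TwistingChain C A) (M : DGModule A) :
    IsDGCoaction C (coextDiff C A τ M.carrier M.d M.actionMap) (coextCoact C M.carrier) where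
  d_sq := coextDiffFrom_comp_self M.d_sq (twistedAction_maurerCartan τ M)
  coassoc := coextCoact_coassoc
  chain := coextCoact_comp_coextDiffFrom M.d (twistedAction τ M)

theorem coextDiff_comp_map_id {A : DGAlgebra} (τ : TwistingChain C A) {M M' : DGModule A}
    {f : M.carrier →ₗ[ℚ] M'.carrier} (hf : IsModuleHom A M M' f) :
    TensorProduct.map LinearMap.id f ∘ₗ coextDiff C A τ M.carrier M.d M.actionMap
      = coextDiff C A τ M'.carrier M'.d M'.actionMap ∘ₗ TensorProduct.map LinearMap.id f := by
  have chain : f ∘ₗ M.d = M'.d ∘ₗ f := hf.2.1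
  have linear : f ∘ₗ twistedAction τ M
      = twistedAction τ M' ∘ₗ TensorProduct.map LinearMap.id f :=
    TensorProduct.ext' fun c m => LinearMap.congr_fun hf.2.2 (τ.toFun c ⊗ₜ m)
  change _ ∘ₗ coextDiffFrom C _ M.d (twistedAction τ M)
    = coextDiffFrom C _ M'.d (twistedAction τ M') ∘ₗ _
  simp only [coextDiffFrom, LinearMap.comp_add, LinearMap.add_comp, LinearMap.comp_assoc,
    coextCoact_comp_map (φ := LinearMap.id) (by simp)]
  simp only [← LinearMap.comp_assoc, ← TensorProduct.map_comp, LinearMap.id_comp,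
    LinearMap.comp_id, chain, linear]

end Coextension

section Filtration

variable {C : DGCoalgebra} {X X' M M' Y : Type} [AddCommGroup X] [Module ℚ X]
  [AddCommGroup X'] [Module ℚ X'] [AddCommGroup M] [Module ℚ M] [AddCommGroup M'] [Module ℚ M']
  [AddCommGroup Y] [Module ℚ Y]

/-- The increasing filtration of `X ⊗ (C ⊗ M)` by degree in `C`: the `p`-th step is spanned by the
`x ⊗ (c ⊗ m)` with `|c| < p`. -/
def coalgebraFiltration (C : DGCoalgebra) (X M : Type) [AddCommGroup X] [Module ℚ X]
    [AddCommGroup M] [Module ℚ M] (p : ℕ) : Submodule ℚ (X ⊗[ℚ] (C.carrier ⊗[ℚ] M)) :=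
  Submodule.span ℚ {w | ∃ q : ℤ, q < p ∧ ∃ c ∈ C.grading q, ∃ x m, w = x ⊗ₜ (c ⊗ₜ m)}

theorem tmul_mem_coalgebraFiltration {p : ℕ} {q : ℤ} (hq : q < p) {c : C.carrier}
    (hc : c ∈ C.grading q) (x : X) (m : M) : x ⊗ₜ (c ⊗ₜ m) ∈ coalgebraFiltration C X M p :=
  Submodule.subset_span ⟨q, hq, c, hc, x, m, rfl⟩

theorem map_mem_of_mem_coalgebraFiltration {p : ℕ} {P : Submodule ℚ Y}
    {L : X ⊗[ℚ] (C.carrier ⊗[ℚ] M) →ₗ[ℚ] Y}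
    (hL : ∀ q : ℤ, q < p → ∀ c ∈ C.grading q, ∀ x m, L (x ⊗ₜ (c ⊗ₜ m)) ∈ P)
    {w : X ⊗[ℚ] (C.carrier ⊗[ℚ] M)} (hw : w ∈ coalgebraFiltration C X M p) : L w ∈ P := by
  suffices coalgebraFiltration C X M p ≤ P.comap L from this hw
  refine Submodule.span_le.2 ?_
  rintro _ ⟨q, hq, c, hc, x, m, rfl⟩
  exact hL q hq c hc x m

theorem isExhaustiveFiltration_coalgebraFiltration :
    IsExhaustiveFiltration (coalgebraFiltration C X M) where
  mono _ _ hpq :=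
    Submodule.span_mono fun _ ⟨q, hq, hw⟩ => ⟨q, hq.trans_le (by exact_mod_cast hpq), hw⟩
  zero_eq_bot := by
    refine Submodule.span_eq_bot.2 ?_
    rintro _ ⟨q, hq, c, hc, x, m, rfl⟩
    rw [C.nonneg q (by exact_mod_cast hq), Submodule.mem_bot] at hc
    simp [hc]
  iSup_eq_top := by
    refine Submodule.eq_top_iff'.2 fun w => ?_
    induction w with
    | zero => exact zero_mem _
    | add v w hv hw => exact add_mem hv hw
    | tmul x y =>
      induction y with
      | zero => simp
      | add y z hy hz => simpa only [TensorProduct.tmul_add] using add_mem hy hz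
      | tmul c m =>
        induction c using DirectSum.Decomposition.inductionOn C.grading with
        | zero => simp
        | add c c' hc hc' =>
          simpa only [TensorProduct.tmul_add, TensorProduct.add_tmul] using add_mem hc hc'
        | @homogeneous q c =>
          exact Submodule.mem_iSup_of_mem (q + 1).toNat
            (tmul_mem_coalgebraFiltration (by omega) c.2 x m)

theorem map_map_mem_coalgebraFiltration {φ : C.carrier →ₗ[ℚ] C.carrier}
    (hφ : ∀ q, ∀ c ∈ C.grading q, φ c ∈ C.grading q) (r : X →ₗ[ℚ] X') (u : M →ₗ[ℚ] M') {p : ℕ}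
    {w : X ⊗[ℚ] (C.carrier ⊗[ℚ] M)} (hw : w ∈ coalgebraFiltration C X M p) :
    TensorProduct.map r (TensorProduct.map φ u) w ∈ coalgebraFiltration C X' M' p :=
  map_mem_of_mem_coalgebraFiltration
    (fun q hq c hc x m => tmul_mem_coalgebraFiltration hq (hφ q c hc) (r x) (u m)) hw

theorem DGCoalgebra.eq_zero_of_nonpos {φ : C.carrier →ₗ[ℚ] Y} (hφ : ∀ c ∈ C.grading 0, φ c = 0)
    {q : ℤ} (hq : q ≤ 0) {c : C.carrier} (hc : c ∈ C.grading q) : φ c = 0 := by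
  obtain rfl | hq := hq.eq_or_lt
  · exact hφ c hc
  · rw [C.nonneg q hq, Submodule.mem_bot] at hc
    rw [hc, map_zero]

/-- The part of the differential of `A ⊗_σ (C ⊗^τ M)` that preserves the degree in `C`. -/
def untwistedDiff (A : DGAlgebra) (C : DGCoalgebra) {M : Type} [AddCommGroup M] [Module ℚ M]
    (dM : M →ₗ[ℚ] M) :
    A.carrier ⊗[ℚ] (C.carrier ⊗[ℚ] M) →ₗ[ℚ] A.carrier ⊗[ℚ] (C.carrier ⊗[ℚ] M) :=
  TensorProduct.map A.d LinearMap.id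
    + TensorProduct.map (parityOf A.grading) (TensorProduct.map (parityOf C.grading) dM)

variable {A : DGAlgebra}

theorem tmul_map_coextCoact_mem_coalgebraFiltration {tact : C.carrier ⊗[ℚ] M →ₗ[ℚ] M}
    (htact : ∀ c ∈ C.grading 0, ∀ m, tact (c ⊗ₜ m) = 0) {φ : C.carrier →ₗ[ℚ] C.carrier}
    (hφ : ∀ q, ∀ c ∈ C.grading q, φ c ∈ C.grading q) {p : ℕ} {q : ℤ} (hq : q ≤ p)
    {c : C.carrier} (hc : c ∈ C.grading q) (x : X) (m : M) :
    x ⊗ₜ TensorProduct.map φ tact (coextCoact C M (c ⊗ₜ m)) ∈ coalgebraFiltration C X M p := by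
  let i := (TensorProduct.mk ℚ C.carrier M).flip m
  let L := TensorProduct.mk ℚ X _ x ∘ₗ TensorProduct.map φ tact ∘ₗ TensorProduct.map LinearMap.id i
  suffices tensorGrading C.grading C.grading q ≤ (coalgebraFiltration C X M p).comap L by
    rw [coextCoact_tmul]
    exact this (C.comul_mem q c hc)
  refine tensorGrading_le fun j k hjk a ha b hb => ?_
  change x ⊗ₜ (φ a ⊗ₜ tact (b ⊗ₜ m)) ∈ coalgebraFiltration C X M p
  obtain hk | hk := le_or_gt k 0
  · have : tact (b ⊗ₜ m) = 0 :=
      DGCoalgebra.eq_zero_of_nonpos (φ := tact ∘ₗ i) (fun c hc => htact c hc m) hk hb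
    simp [this]
  · exact tmul_mem_coalgebraFiltration (by omega) (hφ j a ha) x _

theorem extAction_coextCoact_mem_coalgebraFiltration {σ : C.carrier →ₗ[ℚ] A.carrier}
    (hσ : ∀ c ∈ C.grading 0, σ c = 0) {p : ℕ} {q : ℤ} (hq : q ≤ p)
    {c : C.carrier} (hc : c ∈ C.grading q) (a : A.carrier) (m : M) :
    extAction A _ (a ⊗ₜ TensorProduct.map σ LinearMap.id (coextCoact C M (c ⊗ₜ m)))
      ∈ coalgebraFiltration C A.carrier M p := by
  let i := (TensorProduct.mk ℚ C.carrier M).flip m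
  let L := extAction A (C.carrier ⊗[ℚ] M) ∘ₗ TensorProduct.mk ℚ _ _ a
    ∘ₗ TensorProduct.map σ LinearMap.id ∘ₗ TensorProduct.map LinearMap.id i
  suffices tensorGrading C.grading C.grading q
      ≤ (coalgebraFiltration C A.carrier M p).comap L by
    rw [coextCoact_tmul]
    exact this (C.comul_mem q c hc)
  refine tensorGrading_le fun j k hjk b hb b' hb' => ?_
  change A.mul a (σ b) ⊗ₜ (b' ⊗ₜ m) ∈ coalgebraFiltration C A.carrier M p
  obtain hj | hj := le_or_gt j 0
  · simp [DGCoalgebra.eq_zero_of_nonpos hσ hj hb]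
  · exact tmul_mem_coalgebraFiltration (by omega) hb' _ m

theorem extDiff_sub_untwistedDiff_mem (σ : TwistingChain C A)
    (hσ : ∀ c ∈ C.grading 0, σ.toFun c = 0) {dM : M →ₗ[ℚ] M} {tact : C.carrier ⊗[ℚ] M →ₗ[ℚ] M}
    (htact : ∀ c ∈ C.grading 0, ∀ m, tact (c ⊗ₜ m) = 0) {p : ℕ}
    {w : A.carrier ⊗[ℚ] (C.carrier ⊗[ℚ] M)}
    (hw : w ∈ coalgebraFiltration C A.carrier M (p + 1)) :
    extDiff C A σ _ (coextDiffFrom C M dM tact) (coextCoact C M) w - untwistedDiff A C dM w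
      ∈ coalgebraFiltration C A.carrier M p := by
  refine map_mem_of_mem_coalgebraFiltration (L := extDiff C A σ _ (coextDiffFrom C M dM tact)
    (coextCoact C M) - untwistedDiff A C dM) (fun q hq c hc a m => ?_) hw
  have hqp : q ≤ p := by omega
  set a' := parityOf A.grading a
  have expand : (extDiff C A σ _ (coextDiffFrom C M dM tact) (coextCoact C M)
        - untwistedDiff A C dM) (a ⊗ₜ (c ⊗ₜ m))
      = a' ⊗ₜ (C.d c ⊗ₜ m)
        + a' ⊗ₜ TensorProduct.map (parityOf C.grading) tact (coextCoact C M (c ⊗ₜ m))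
        - extAction A _ (a' ⊗ₜ TensorProduct.map σ.toFun LinearMap.id
            (coextCoact C M (c ⊗ₜ m))) := by
    simp only [LinearMap.sub_apply, extDiff_tmul, untwistedDiff, coextDiffFrom,
      LinearMap.add_apply, LinearMap.comp_apply, TensorProduct.map_tmul, LinearMap.id_apply,
      TensorProduct.tmul_add, a']
    abel
  rw [expand]
  exact sub_mem (add_mem (tmul_mem_coalgebraFiltration (by omega) (C.d_mem q c hc) a' m)
    (tmul_map_coextCoact_mem_coalgebraFiltration htact (fun _ _ => parityOf_mem _) hqp hc a' m))
    (extAction_coextCoact_mem_coalgebraFiltration hσ hqp hc a' m)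

theorem untwistedDiff_comp_even {dM : M →ₗ[ℚ] M} {dM' : M' →ₗ[ℚ] M'} (u : M →ₗ[ℚ] M') :
    untwistedDiff A C dM' ∘ₗ TensorProduct.map LinearMap.id (TensorProduct.map LinearMap.id u)
        - TensorProduct.map LinearMap.id (TensorProduct.map LinearMap.id u) ∘ₗ untwistedDiff A C dM
      = TensorProduct.map (parityOf A.grading)
          (TensorProduct.map (parityOf C.grading) (dM' ∘ₗ u - u ∘ₗ dM)) :=
  TensorProduct.ext_threefold' fun a c m => by
    simp [untwistedDiff, TensorProduct.tmul_sub]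

theorem untwistedDiff_comp_odd {dM : M →ₗ[ℚ] M} {dM' : M' →ₗ[ℚ] M'} (u : M →ₗ[ℚ] M') :
    untwistedDiff A C dM'
          ∘ₗ TensorProduct.map (parityOf A.grading) (TensorProduct.map (parityOf C.grading) u)
        + TensorProduct.map (parityOf A.grading) (TensorProduct.map (parityOf C.grading) u)
          ∘ₗ untwistedDiff A C dM
      = TensorProduct.map LinearMap.id (TensorProduct.map LinearMap.id (dM' ∘ₗ u + u ∘ₗ dM)) :=
  TensorProduct.ext_threefold' fun a c m => by
    simp only [untwistedDiff, LinearMap.add_apply, LinearMap.comp_apply, TensorProduct.map_tmul,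
      LinearMap.id_apply, parityOf_parityOf, map_add, A.parityOf_d, TensorProduct.neg_tmul,
      TensorProduct.tmul_add]
    abel

end Filtration

/-- The contraction `s` of the cone of `f` extended to `A ⊗ (C ⊗ -)`, with a Koszul sign on its
components of odd degree. -/
def ConeContraction.tensor (A : DGAlgebra) (C : DGCoalgebra) {M M' : Type} [AddCommGroup M]
    [Module ℚ M] [AddCommGroup M'] [Module ℚ M'] {dM : M →ₗ[ℚ] M} {dM' : M' →ₗ[ℚ] M'}
    {f : M →ₗ[ℚ] M'} (s : ConeContraction dM dM' f) :
    ConeContraction (untwistedDiff A C dM) (untwistedDiff A C dM')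
      (TensorProduct.map LinearMap.id (TensorProduct.map LinearMap.id f)) where
  inv := TensorProduct.map LinearMap.id (TensorProduct.map LinearMap.id s.inv)
  homSource := TensorProduct.map (parityOf A.grading)
    (TensorProduct.map (parityOf C.grading) s.homSource)
  homTarget := TensorProduct.map (parityOf A.grading)
    (TensorProduct.map (parityOf C.grading) s.homTarget)
  homCoh := TensorProduct.map LinearMap.id (TensorProduct.map LinearMap.id s.homCoh)
  inv_chain := by
    have h := untwistedDiff_comp_even (A := A) (C := C) (dM := dM') (dM' := dM) s.inv
    rw [s.inv_chain, sub_self, TensorProduct.map_zero_right, TensorProduct.map_zero_right,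
      sub_eq_zero] at h
    exact h.symm
  homSource_eq := by
    rw [untwistedDiff_comp_odd, s.homSource_eq]
    exact TensorProduct.ext_threefold' fun a c m => by simp [TensorProduct.tmul_sub]
  homTarget_eq := by
    rw [untwistedDiff_comp_odd, s.homTarget_eq]
    exact TensorProduct.ext_threefold' fun a c m => by simp [TensorProduct.tmul_sub]
  homCoh_eq := by
    rw [untwistedDiff_comp_even, s.homCoh_eq]
    exact TensorProduct.ext_threefold' fun a c m => by simp [TensorProduct.tmul_sub]

theorem ConeContraction.tensor_toMap_mem (A : DGAlgebra) (C : DGCoalgebra) {M M' : Type}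
    [AddCommGroup M] [Module ℚ M] [AddCommGroup M'] [Module ℚ M'] {dM : M →ₗ[ℚ] M}
    {dM' : M' →ₗ[ℚ] M'} {f : M →ₗ[ℚ] M'} (s : ConeContraction dM dM' f) {p : ℕ}
    {z : A.carrier ⊗[ℚ] (C.carrier ⊗[ℚ] M) × A.carrier ⊗[ℚ] (C.carrier ⊗[ℚ] M')}
    (hz : z ∈ (coalgebraFiltration C A.carrier M p).prod (coalgebraFiltration C A.carrier M' p)) :
    (s.tensor A C).toMap z
      ∈ (coalgebraFiltration C A.carrier M p).prod (coalgebraFiltration C A.carrier M' p) := by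
  have id_mem : ∀ q, ∀ c ∈ C.grading q, LinearMap.id (R := ℚ) c ∈ C.grading q := fun _ _ hc => hc
  have parity_mem : ∀ q, ∀ c ∈ C.grading q, parityOf C.grading c ∈ C.grading q :=
    fun _ _ => parityOf_mem _
  exact ⟨add_mem (neg_mem (map_map_mem_coalgebraFiltration parity_mem _ _ hz.1))
      (map_map_mem_coalgebraFiltration id_mem _ _ hz.2),
    add_mem (map_map_mem_coalgebraFiltration id_mem _ _ hz.1)
      (map_map_mem_coalgebraFiltration parity_mem _ _ hz.2)⟩

theorem CoaugDGCoalgebra.TwoReduced.map_eq_zero {C : CoaugDGCoalgebra} (hC : C.TwoReduced)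
    {Y : Type} [AddCommGroup Y] [Module ℚ Y] {φ : C.carrier →ₗ[ℚ] Y} (hφ : φ C.one = 0)
    (c : C.carrier) (hc : c ∈ C.grading 0) : φ c = 0 := by
  rw [hC.1] at hc
  obtain ⟨r, rfl⟩ := Submodule.mem_span_singleton.1 hc
  rw [map_smul, hφ, smul_zero]

theorem twisted_coextension_sends_quasiIso_to_tEquiv_general {C : DGCoalgebra} {R S : DGAlgebra}
    (σ : TwistingChain C R) (τ : TwistingChain C S)
    (hσ : ∀ c ∈ C.grading 0, σ.toFun c = 0) (hτ : ∀ c ∈ C.grading 0, τ.toFun c = 0)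
    {A B : DGModule S} {f : A.carrier →ₗ[ℚ] B.carrier} (hf : IsModuleHom S A B f)
    (hq : IsQuasiIso A.d B.d f) :
    IsQuasiIso
      (extDiff C R σ (C.carrier ⊗[ℚ] A.carrier) (coextDiff C S τ A.carrier A.d A.actionMap)
        (coextCoact C A.carrier))
      (extDiff C R σ (C.carrier ⊗[ℚ] B.carrier) (coextDiff C S τ B.carrier B.d B.actionMap)
        (coextCoact C B.carrier))
      (TensorProduct.map LinearMap.id (TensorProduct.map LinearMap.id f)) := by
  have action_zero (M : DGModule S) (c) (hc : c ∈ C.grading 0) (m : M.carrier) :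
      twistedAction τ M (c ⊗ₜ m) = 0 := by
    rw [twistedAction_tmul, hτ c hc, map_zero, LinearMap.zero_apply]
  obtain ⟨s⟩ := hq.nonempty_coneContraction A.d_sq B.d_sq hf.2.1
  exact isQuasiIso_of_coneContraction_mod_filtration
    (extDiff_comp_self σ (isDGCoaction_coextDiff τ A))
    (extDiff_comp_self σ (isDGCoaction_coextDiff τ B))
    (extDiff_comp_map_id σ (coextDiff_comp_map_id τ hf)
      (coextCoact_comp_map (φ := LinearMap.id) (by simp) f).symm)
    (s.tensor R C)
    isExhaustiveFiltration_coalgebraFiltration isExhaustiveFiltration_coalgebraFiltration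
    (fun _ _ => extDiff_sub_untwistedDiff_mem σ hσ (action_zero A))
    (fun _ _ => extDiff_sub_untwistedDiff_mem σ hσ (action_zero B))
    (fun _ _ => s.tensor_toMap_mem R C)

/-- For a 2-reduced cocommutative dg coalgebra `C`, the twisted
coextension functor `t_*` sends quasi-isomorphisms of left `ΩC`-modules to
`t`-equivalences of `C`-comodules: if `f : A → B` is a quasi-isomorphism of
`ΩC`-modules then `t^!(t_*f) : ΩC ⊗_t (C ⊗^t A) → ΩC ⊗_t (C ⊗^t B)` is a
quasi-isomorphism. -/
theorem twisted_coextension_sends_quasiIso_to_tEquiv (C : CoaugDGCoalgebra)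
    (hred : C.TwoReduced) (hcc : C.toDGCoalgebra.Cocomm) (Ω : CobarData C)
    (A B : DGModule Ω.alg) (f : A.carrier →ₗ[ℚ] B.carrier)
    (hf : IsModuleHom Ω.alg A B f) (hq : IsQuasiIso A.d B.d f) :
    IsQuasiIso
      (extDiff C.toDGCoalgebra Ω.alg Ω.t (C.carrier ⊗[ℚ] A.carrier)
        (coextDiff C.toDGCoalgebra Ω.alg Ω.t A.carrier A.d A.actionMap)
        (coextCoact C.toDGCoalgebra A.carrier))
      (extDiff C.toDGCoalgebra Ω.alg Ω.t (C.carrier ⊗[ℚ] B.carrier)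
        (coextDiff C.toDGCoalgebra Ω.alg Ω.t B.carrier B.d B.actionMap)
        (coextCoact C.toDGCoalgebra B.carrier))
      (TensorProduct.map LinearMap.id (TensorProduct.map LinearMap.id f)) := by
  have t_eq_zero := hred.map_eq_zero Ω.t_one
  exact twisted_coextension_sends_quasiIso_to_tEquiv_general Ω.t Ω.t t_eq_zero t_eq_zero hf hq

end
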